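/- Fix integers j and k with k ≥ 1. Let S ⊆ ℤ be a finite arithmetic progression whose consecutive terms differ by 2 or by 4, with |S| < k, and all of whose elements are congruent to j+k+1 modulo 2. Then F_{j,k}|_S ≠ 0. -/

import Mathlib

/-!
The value of `F_{j,k}|_S` at a suitable point with all coordinates `±1` is shown to be nonzero.

Put `r = p + q - k`, `s = p - q`, `t = 2 p + 2 q - k + 2 - 4 c` (`coord`). Then `Q_k` is the set
`max 0 (p + q - k) < c ≤ min p q`, and the trace on `Q_k` of an order ideal of `P_k` consists of
the levels `c > C p q`, where `C` is the corner-sum matrix of a `k × k` alternating sign matrix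
(`exists_corner`). The entries `1` of that matrix are the positions `(p, q)` carrying an element of
`Q_{k+1}` that can be added to or removed from the ideal freely (`IsFree`), and the label of an
element of `Q_{k+1}` at `(p, q)` depends only on the line `2 p + q = const`. The parity condition
says that `S` consists of labels of such lines.

Choose a set `T` of lines disjoint from `S` that meets the square `[1, k]²` in the graph of a
permutation `σ` (`exists_lines`): a residue class modulo `k` if `k` is odd, and a class of even
lines together with a class of odd lines modulo `2 k` if `k` is even; such a `T` exists because
`|S| < k`. Evaluate the labels of lines outside `T` at `-1` and all other variables
at `1`. Ideals having a free element of weight `-1` cancel in pairs by toggling (`sum_bad`). For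
each of the remaining ideals the entries `1` of the matrix lie on the graph of `σ`, and since its
rows sum to `1` it is the permutation matrix of `σ` (`eq_permIdeal`). These ideals do occur
(`permIdeal_mem_ideals`, `permIdeal_free`) and differ only in free elements of weight `1`, so their
contributions have equal signs and do not cancel (`sum_ne_zero`).
-/

open MvPolynomial
open scoped Classical

noncomputable section

/-- The set `Q_k`: triples `(r,s,t)` with `|r|+|s| ≤ k-2`, `r+s ≡ k (mod 2)`,
`t ≡ 2|s|-k+2 (mod 4)` and `2|s|-k+2 ≤ t ≤ k-2-2|r|`. -/
def pentagramQ (k : ℤ) : Set (ℤ × ℤ × ℤ) :=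
  {p | |p.1| + |p.2.1| ≤ k - 2 ∧ (2 : ℤ) ∣ (p.1 + p.2.1 - k) ∧
    (4 : ℤ) ∣ (p.2.2 - (2 * |p.2.1| - k + 2)) ∧
    2 * |p.2.1| - k + 2 ≤ p.2.2 ∧ p.2.2 ≤ k - 2 - 2 * |p.1|}

/-- The set `P_k = Q_k ∪ Q_{k+1}`. -/
def pentagramP (k : ℤ) : Set (ℤ × ℤ × ℤ) := pentagramQ k ∪ pentagramQ (k + 1)

/-- The covering relation: `(r',s',t')` covers `(r,s,t)` iff `t' = t + 1` and
`|r'-r| + |s'-s| = 1`. -/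
def pentagramCovers (x y : ℤ × ℤ × ℤ) : Prop :=
  y.2.2 = x.2.2 + 1 ∧ |y.1 - x.1| + |y.2.1 - x.2.1| = 1

/-- The partial order on `P_k`: the reflexive-transitive closure of the covering
relation within `P_k`. -/
def pentagramLe (k : ℤ) : (ℤ × ℤ × ℤ) → (ℤ × ℤ × ℤ) → Prop :=
  Relation.ReflTransGen
    (fun x y => x ∈ pentagramP k ∧ y ∈ pentagramP k ∧ pentagramCovers x y)

/-- An order ideal of `P_k`: a downward-closed subset of `P_k`. -/
def IsPentagramOrderIdeal (k : ℤ) (I : Set (ℤ × ℤ × ℤ)) : Prop :=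
  I ⊆ pentagramP k ∧ ∀ x y, y ∈ I → pentagramLe k x y → x ∈ I

/-- `P_k` realized as a `Finset` (it is contained in the displayed finite box). -/
def pentagramPFinset (k : ℤ) : Finset (ℤ × ℤ × ℤ) :=
  ((Finset.Icc (-(k-1)) (k-1)) ×ˢ (Finset.Icc (-(k-1)) (k-1)) ×ˢ
    (Finset.Icc (-(k-1)) (k-1))).filter (fun p => p ∈ pentagramP k)

/-- The F-polynomial `F_{j,k} = Σ_{order ideals I of P_k} Π_{(r,s,t) ∈ I} y_{3r+s+j}`,
as an element of `ℤ[y_i : i ∈ ℤ] = MvPolynomial ℤ ℤ`. -/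
def pentagramF (j k : ℤ) : MvPolynomial ℤ ℤ :=
  ∑ I ∈ (pentagramPFinset k).powerset.filter
      (fun I : Finset (ℤ × ℤ × ℤ) => IsPentagramOrderIdeal k (↑I : Set (ℤ × ℤ × ℤ))),
    ∏ p ∈ I, X (3 * p.1 + p.2.1 + j)

/-- The ring endomorphism of `ℤ[y_i : i ∈ ℤ]` sending `y_i ↦ -1` for `i ∈ S`
and fixing the other variables; `substNeg S F` is `F|_S`. -/
def substNeg (S : Set ℤ) : MvPolynomial ℤ ℤ →+* MvPolynomial ℤ ℤ :=
  (MvPolynomial.aeval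
    (fun i : ℤ => if i ∈ S then (-1 : MvPolynomial ℤ ℤ) else X i)).toRingHom

/-- The arithmetic progression `[a,b]_d = {a, a+d, a+2d, …, b}` (as a subset of `ℤ`). -/
def AP (a b d : ℤ) : Set ℤ := {x | a ≤ x ∧ x ≤ b ∧ d ∣ (x - a)}

/-! ### Corner-sum coordinates on the poset -/

/-- The element of `Q_k` above the lattice point `(p, q)` with level `c`. In these coordinates
`Q_k` is `{(p, q, c) : max 0 (p + q - k) < c ≤ min p q}`, and an order ideal contains exactly the
levels `c` exceeding some number `C p q`, where `C` is the corner-sum matrix of an alternating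
sign matrix. -/
def coord (k p q c : ℤ) : ℤ × ℤ × ℤ := (p + q - k, p - q, 2 * p + 2 * q - k + 2 - 4 * c)

lemma coord_mem_Q (k p q c : ℤ) :
    coord k p q c ∈ pentagramQ k ↔ 0 < c ∧ p + q - k < c ∧ c ≤ p ∧ c ≤ q := by
  simp only [coord, pentagramQ, Set.mem_ofPred_eq]
  constructor
  · rintro ⟨h1, h2, h3, h4, h5⟩
    rcases abs_cases (p + q - k) with h | h <;> rcases abs_cases (p - q) with h' | h' <;> omega
  · rintro ⟨h1, h2, h3, h4⟩
    rcases abs_cases (p + q - k) with h | h <;> rcases abs_cases (p - q) with h' | h' <;>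
      refine ⟨?_, ?_, ?_, ?_, ?_⟩ <;> omega

lemma exists_coord {k : ℤ} {x : ℤ × ℤ × ℤ} (hx : x ∈ pentagramQ k) :
    ∃ p q c, x = coord k p q c ∧ 0 < c ∧ p + q - k < c ∧ c ≤ p ∧ c ≤ q := by
  have hx' := hx
  obtain ⟨r, s, t⟩ := x
  simp only [pentagramQ, Set.mem_ofPred_eq] at hx'
  obtain ⟨h1, ⟨e, he⟩, ⟨f, hf⟩, h4, h5⟩ := hx'
  have key : ∃ p q c, (r, s, t) = coord k p q c := by
    rcases abs_cases s with h | h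
    · refine ⟨e + k, e + k - s, e + k - s - f, ?_⟩
      simp only [coord, Prod.mk.injEq]
      omega
    · refine ⟨e + k, e + k - s, e + k - f, ?_⟩
      simp only [coord, Prod.mk.injEq]
      omega
  obtain ⟨p, q, c, h⟩ := key
  refine ⟨p, q, c, h, ?_⟩
  rw [h] at hx
  exact (coord_mem_Q k p q c).1 hx

lemma coord_injective {k p q c p' q' c' : ℤ} (h : coord k p q c = coord k p' q' c') :
    p = p' ∧ q = q' ∧ c = c' := by
  simp only [coord, Prod.mk.injEq] at h
  omega

lemma coord_ne (k p q c p' q' c' : ℤ) : coord k p q c ≠ coord (k + 1) p' q' c' := by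
  intro h
  simp only [coord, Prod.mk.injEq] at h
  omega

/-- The elements of `Q_k` covering a given element of `Q_{k+1}`. -/
lemma covers_up (k p q c p' q' c' : ℤ) :
    pentagramCovers (coord (k + 1) p q c) (coord k p' q' c') ↔
      (p' = p ∧ q' = q ∧ c' = c) ∨ (p' = p - 1 ∧ q' = q - 1 ∧ c' = c - 1) := by
  simp only [coord, pentagramCovers]
  constructor
  · rintro ⟨h1, h2⟩
    rcases abs_cases (p' + q' - k - (p + q - (k + 1))) with h | h <;>
      rcases abs_cases (p' - q' - (p - q)) with h' | h' <;> omega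
  · rintro (⟨rfl, rfl, rfl⟩ | ⟨rfl, rfl, rfl⟩)
    · rcases abs_cases (p' + q' - k - (p' + q' - (k + 1))) with h | h <;>
        rcases abs_cases (p' - q' - (p' - q')) with h' | h' <;> omega
    · rcases abs_cases (p - 1 + (q - 1) - k - (p + q - (k + 1))) with h | h <;>
        rcases abs_cases (p - 1 - (q - 1) - (p - q)) with h' | h' <;> omega

/-- The elements of `Q_k` covered by a given element of `Q_{k+1}`. -/
lemma covers_down (k p q c p' q' c' : ℤ) :
    pentagramCovers (coord k p' q' c') (coord (k + 1) p q c) ↔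
      (p' = p - 1 ∧ q' = q ∧ c' = c) ∨ (p' = p ∧ q' = q - 1 ∧ c' = c) := by
  simp only [coord, pentagramCovers]
  constructor
  · rintro ⟨h1, h2⟩
    rcases abs_cases (p + q - (k + 1) - (p' + q' - k)) with h | h <;>
      rcases abs_cases (p - q - (p' - q')) with h' | h' <;> omega
  · rintro (⟨rfl, rfl, rfl⟩ | ⟨rfl, rfl, rfl⟩)
    · rcases abs_cases (p + q' - (k + 1) - (p - 1 + q' - k)) with h | h <;>
        rcases abs_cases (p - q' - (p - 1 - q')) with h' | h' <;> omega
    · rcases abs_cases (p' + q - (k + 1) - (p' + (q - 1) - k)) with h | h <;>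
        rcases abs_cases (p' - q - (p' - (q - 1))) with h' | h' <;> omega

/-- Covering relations only connect `Q_k` with `Q_{k+1}`, by parity of `r + s`. -/
lemma covers_parity {x y : ℤ × ℤ × ℤ} (h : pentagramCovers x y) :
    ¬ (2 : ℤ) ∣ (x.1 + x.2.1) - (y.1 + y.2.1) := by
  obtain ⟨-, h2⟩ := h
  rcases abs_cases (y.1 - x.1) with h | h <;> rcases abs_cases (y.2.1 - x.2.1) with h' | h' <;>
    omega

lemma mem_Q_parity {k : ℤ} {x : ℤ × ℤ × ℤ} (h : x ∈ pentagramQ k) :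
    (2 : ℤ) ∣ x.1 + x.2.1 - k := h.2.1

lemma mem_Q_of_covers_right {k : ℤ} {x y : ℤ × ℤ × ℤ} (hx : x ∈ pentagramQ (k + 1))
    (hy : y ∈ pentagramP k) (h : pentagramCovers x y) : y ∈ pentagramQ k := by
  rcases hy with hy | hy
  · exact hy
  · have := covers_parity h
    have := mem_Q_parity hx
    have := mem_Q_parity hy
    omega

lemma mem_Q_of_covers_left {k : ℤ} {x y : ℤ × ℤ × ℤ} (hx : x ∈ pentagramQ (k + 1))
    (hy : y ∈ pentagramP k) (h : pentagramCovers y x) : y ∈ pentagramQ k := by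
  rcases hy with hy | hy
  · exact hy
  · have := covers_parity h
    have := mem_Q_parity hx
    have := mem_Q_parity hy
    omega

lemma not_mem_Q_succ {k : ℤ} {x : ℤ × ℤ × ℤ} (hx : x ∈ pentagramQ k) :
    x ∉ pentagramQ (k + 1) := by
  intro h
  have := mem_Q_parity hx
  have := mem_Q_parity h
  omega

lemma mem_PFinset {k : ℤ} {x : ℤ × ℤ × ℤ} : x ∈ pentagramPFinset k ↔ x ∈ pentagramP k := by
  simp only [pentagramPFinset, Finset.mem_filter, Finset.mem_product, Finset.mem_Icc]
  refine ⟨fun h => h.2, fun h => ⟨?_, h⟩⟩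
  obtain ⟨r, s, t⟩ := x
  simp only [pentagramP, pentagramQ, Set.mem_union, Set.mem_ofPred_eq] at h
  rcases abs_cases r with h1 | h1 <;> rcases abs_cases s with h2 | h2 <;>
    rcases h with h | h <;> simp only <;> omega

/-! ### Order ideals and toggling -/

/-- The order ideals of `P_k`, as finite sets. -/
def ideals (k : ℤ) : Finset (Finset (ℤ × ℤ × ℤ)) :=
  (pentagramPFinset k).powerset.filter
    (fun I : Finset (ℤ × ℤ × ℤ) => IsPentagramOrderIdeal k (↑I : Set (ℤ × ℤ × ℤ)))

/-- Being downward closed only has to be tested on covering relations. -/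
lemma mem_ideals {k : ℤ} {I : Finset (ℤ × ℤ × ℤ)} :
    I ∈ ideals k ↔ (∀ x ∈ I, x ∈ pentagramP k) ∧
      ∀ x ∈ pentagramP k, ∀ y ∈ I, pentagramCovers x y → x ∈ I := by
  rw [ideals, Finset.mem_filter, Finset.mem_powerset, IsPentagramOrderIdeal]
  constructor
  · rintro ⟨-, h1, h2⟩
    refine ⟨fun x hx => h1 hx, fun x hx y hy hxy => ?_⟩
    exact h2 x y hy (Relation.ReflTransGen.single ⟨hx, h1 hy, hxy⟩)
  · rintro ⟨h1, h2⟩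
    refine ⟨fun x hx => mem_PFinset.2 (h1 x hx), fun x hx => h1 x hx, fun x y hy hxy => ?_⟩
    induction hxy with
    | refl => exact hy
    | tail _ hbc ih => exact ih (h2 _ hbc.1 _ hy hbc.2.2)

/-- `x` may be added to or removed from `I` without leaving the set of order ideals: nothing that
covers `x` is in `I`, and everything covered by `x` is. -/
def IsFree (k : ℤ) (I : Finset (ℤ × ℤ × ℤ)) (x : ℤ × ℤ × ℤ) : Prop :=
  (∀ y ∈ pentagramP k, pentagramCovers x y → y ∉ I) ∧
    ∀ y ∈ pentagramP k, pentagramCovers y x → y ∈ I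

lemma isFree_congr {k : ℤ} {I J : Finset (ℤ × ℤ × ℤ)} {x : ℤ × ℤ × ℤ}
    (hx : x ∈ pentagramQ (k + 1)) (hIJ : ∀ y ∈ pentagramQ k, y ∈ I ↔ y ∈ J)
    (h : IsFree k I x) : IsFree k J x := by
  refine ⟨fun y hy hxy => ?_, fun y hy hxy => ?_⟩
  · rw [← hIJ y (mem_Q_of_covers_right hx hy hxy)]
    exact h.1 y hy hxy
  · rw [← hIJ y (mem_Q_of_covers_left hx hy hxy)]
    exact h.2 y hy hxy

/-- Add `x` to `I`, or remove it if already present. -/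
def toggle (I : Finset (ℤ × ℤ × ℤ)) (x : ℤ × ℤ × ℤ) : Finset (ℤ × ℤ × ℤ) :=
  if x ∈ I then I.erase x else insert x I

lemma mem_toggle_of_ne {I : Finset (ℤ × ℤ × ℤ)} {x y : ℤ × ℤ × ℤ} (h : y ≠ x) :
    y ∈ toggle I x ↔ y ∈ I := by
  unfold toggle
  split_ifs <;> simp [h]

lemma mem_toggle_self {I : Finset (ℤ × ℤ × ℤ)} {x : ℤ × ℤ × ℤ} :
    x ∈ toggle I x ↔ x ∉ I := by
  unfold toggle
  split_ifs with h <;> simp [h]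

lemma toggle_toggle (I : Finset (ℤ × ℤ × ℤ)) (x : ℤ × ℤ × ℤ) : toggle (toggle I x) x = I := by
  ext y
  by_cases h : y = x
  · subst h
    rw [mem_toggle_self, mem_toggle_self, not_not]
  · rw [mem_toggle_of_ne h, mem_toggle_of_ne h]

lemma not_covers_self (x : ℤ × ℤ × ℤ) : ¬ pentagramCovers x x := by
  rintro ⟨h, -⟩
  omega

lemma toggle_mem_ideals {k : ℤ} {I : Finset (ℤ × ℤ × ℤ)} {x : ℤ × ℤ × ℤ}
    (hI : I ∈ ideals k) (hx : x ∈ pentagramP k) (hf : IsFree k I x) :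
    toggle I x ∈ ideals k := by
  rw [mem_ideals] at hI ⊢
  refine ⟨fun y hy => ?_, fun z hz y hy hzy => ?_⟩
  · by_cases h : y = x
    · exact h ▸ hx
    · exact hI.1 y ((mem_toggle_of_ne h).1 hy)
  · by_cases h : y = x
    · subst h
      have hne : z ≠ y := fun h => not_covers_self y (h ▸ hzy)
      exact (mem_toggle_of_ne hne).2 (hf.2 z hz hzy)
    · rw [mem_toggle_of_ne h] at hy
      by_cases h' : z = x
      · subst h'
        exact absurd hy (hf.1 y (hI.1 y hy) hzy)
      · exact (mem_toggle_of_ne h').2 (hI.2 z hz y hy hzy)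

lemma prod_toggle (wt : ℤ × ℤ × ℤ → ℤ) (I : Finset (ℤ × ℤ × ℤ)) (x : ℤ × ℤ × ℤ)
    (hx : wt x = -1) : ∏ p ∈ I, wt p + ∏ p ∈ toggle I x, wt p = 0 := by
  unfold toggle
  split_ifs with h
  · rw [← Finset.mul_prod_erase I wt h, hx]
    ring
  · rw [Finset.prod_insert h, hx]
    ring

/-- The free elements of `Q_{k+1}` with weight `-1`. -/
def freeBad (k : ℤ) (wt : ℤ × ℤ × ℤ → ℤ) (I : Finset (ℤ × ℤ × ℤ)) : Finset (ℤ × ℤ × ℤ) :=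
  (pentagramPFinset k).filter (fun x => x ∈ pentagramQ (k + 1) ∧ wt x = -1 ∧ IsFree k I x)

lemma mem_freeBad {k : ℤ} {wt : ℤ × ℤ × ℤ → ℤ} {I : Finset (ℤ × ℤ × ℤ)} {x : ℤ × ℤ × ℤ} :
    x ∈ freeBad k wt I ↔ x ∈ pentagramQ (k + 1) ∧ wt x = -1 ∧ IsFree k I x := by
  simp only [freeBad, Finset.mem_filter, mem_PFinset]
  exact ⟨fun h => h.2, fun h => ⟨Or.inr h.1, h⟩⟩

lemma freeBad_toggle (k : ℤ) (wt : ℤ × ℤ × ℤ → ℤ) (I : Finset (ℤ × ℤ × ℤ)) {x : ℤ × ℤ × ℤ}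
    (hx : x ∈ pentagramQ (k + 1)) : freeBad k wt (toggle I x) = freeBad k wt I := by
  have h : ∀ y ∈ pentagramQ k, y ∈ toggle I x ↔ y ∈ I := fun y hy =>
    mem_toggle_of_ne (fun h => not_mem_Q_succ hy (h ▸ hx))
  ext y
  rw [mem_freeBad, mem_freeBad]
  exact ⟨fun ⟨h1, h2, h3⟩ => ⟨h1, h2, isFree_congr h1 h h3⟩,
    fun ⟨h1, h2, h3⟩ => ⟨h1, h2, isFree_congr h1 (fun y hy => (h y hy).symm) h3⟩⟩

/-- A choice of element depending only on the set, so that the toggling map below is an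
involution. -/
def pick (s : Finset (ℤ × ℤ × ℤ)) : ℤ × ℤ × ℤ := if h : s.Nonempty then h.choose else 0

lemma pick_mem {s : Finset (ℤ × ℤ × ℤ)} (h : s ≠ ∅) : pick s ∈ s := by
  have h' := Finset.nonempty_iff_ne_empty.2 h
  simp only [pick, h', dif_pos]
  exact h'.choose_spec

/-- Ideals with a free element of `Q_{k+1}` of weight `-1` cancel in pairs. -/
lemma sum_bad (k : ℤ) (wt : ℤ × ℤ × ℤ → ℤ) :
    ∑ I ∈ (ideals k).filter (fun I => ¬ freeBad k wt I = ∅), ∏ p ∈ I, wt p = 0 := by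
  have key : ∀ I ∈ (ideals k).filter (fun I => ¬ freeBad k wt I = ∅),
      I ∈ ideals k ∧ freeBad k wt I ≠ ∅ ∧ pick (freeBad k wt I) ∈ pentagramQ (k + 1) ∧
        wt (pick (freeBad k wt I)) = -1 ∧ IsFree k I (pick (freeBad k wt I)) := by
    intro I hI
    rw [Finset.mem_filter] at hI
    exact ⟨hI.1, hI.2, mem_freeBad.1 (pick_mem hI.2)⟩
  refine Finset.sum_involution (fun I _ => toggle I (pick (freeBad k wt I))) ?_ ?_ ?_ ?_
  · intro I hI
    exact prod_toggle wt I _ (key I hI).2.2.2.1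
  · intro I hI _ h
    have := @mem_toggle_self I (pick (freeBad k wt I))
    rw [h] at this
    tauto
  · intro I hI
    obtain ⟨h1, h2, h3, h4, h5⟩ := key I hI
    rw [Finset.mem_filter, freeBad_toggle k wt I h3]
    exact ⟨toggle_mem_ideals h1 (Or.inr h3) h5, h2⟩
  · intro I hI
    obtain ⟨h1, h2, h3, h4, h5⟩ := key I hI
    simp only [freeBad_toggle k wt I h3, toggle_toggle]

/-- The signed count of ideals is nonzero as soon as some ideal survives the cancellation and all
surviving ideals have the same trace on `Q_k`: the survivors then all carry the same sign. -/
lemma sum_ne_zero (k : ℤ) (wt : ℤ × ℤ × ℤ → ℤ) (hwt : ∀ x, wt x = 1 ∨ wt x = -1)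
    (I₀ : Finset (ℤ × ℤ × ℤ)) (h₀ : I₀ ∈ ideals k) (hg₀ : freeBad k wt I₀ = ∅)
    (huniq : ∀ I ∈ ideals k, freeBad k wt I = ∅ → ∀ x ∈ pentagramQ k, x ∈ I ↔ x ∈ I₀) :
    ∑ I ∈ ideals k, ∏ p ∈ I, wt p ≠ 0 := by
  rw [← Finset.sum_filter_add_sum_filter_not (ideals k) (fun I => freeBad k wt I = ∅),
    sum_bad, add_zero]
  -- an element lying in one survivor but not in the other is free, hence of weight `1`
  have aux : ∀ I ∈ ideals k, ∀ J ∈ ideals k, freeBad k wt I = ∅ →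
      (∀ x ∈ pentagramQ k, x ∈ I ↔ x ∈ J) → ∀ x ∈ I, x ∉ I ∩ J → wt x = 1 := by
    intro I hI J hJ hgI hIJ x hxI hxJ
    rw [mem_ideals] at hI hJ
    have hxJ' : x ∉ J := fun h => hxJ (Finset.mem_inter.2 ⟨hxI, h⟩)
    have hxQ : x ∈ pentagramQ (k + 1) := by
      rcases hI.1 x hxI with h | h
      · exact absurd ((hIJ x h).1 hxI) hxJ'
      · exact h
    have hfree : IsFree k I x := by
      refine ⟨fun y hy hxy hyI => ?_, fun y hy hyx => hI.2 y hy x hxI hyx⟩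
      exact hxJ' (hJ.2 x (Or.inr hxQ) y
        ((hIJ y (mem_Q_of_covers_right hxQ hy hxy)).1 hyI) hxy)
    rcases hwt x with h | h
    · exact h
    · have : x ∈ freeBad k wt I := mem_freeBad.2 ⟨hxQ, h, hfree⟩
      rw [hgI] at this
      simp at this
  have hconst : ∀ I ∈ (ideals k).filter (fun I => freeBad k wt I = ∅),
      ∏ p ∈ I, wt p = ∏ p ∈ I₀, wt p := by
    intro I hI
    rw [Finset.mem_filter] at hI
    have hu := huniq I hI.1 hI.2
    rw [← Finset.prod_subset Finset.inter_subset_left (aux I hI.1 I₀ h₀ hI.2 hu),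
      ← Finset.prod_subset Finset.inter_subset_left
        (aux I₀ h₀ I hI.1 hg₀ (fun x hx => (hu x hx).symm)), Finset.inter_comm]
  rw [Finset.sum_congr rfl hconst, Finset.sum_const, nsmul_eq_mul]
  refine mul_ne_zero ?_ ?_
  · rw [Nat.cast_ne_zero]
    exact Finset.card_ne_zero.2 ⟨I₀, Finset.mem_filter.2 ⟨h₀, hg₀⟩⟩
  · rw [Finset.prod_ne_zero_iff]
    intro x _
    rcases hwt x with h | h <;> rw [h] <;> decide

/-! ### The corner-sum matrix of an ideal -/

/-- Membership in `I` of level `c` above `(p, q)`, where the levels below the bottom of the column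
(that is, with `c > min p q`) count as members. -/
def Below (k : ℤ) (I : Finset (ℤ × ℤ × ℤ)) (p q c : ℤ) : Prop :=
  p < c ∨ q < c ∨ coord k p q c ∈ I

section ideal

variable {k : ℤ} {I : Finset (ℤ × ℤ × ℤ)}

lemma bounds_of_mem (hI : I ∈ ideals k) {p q c : ℤ} (h : coord k p q c ∈ I) :
    0 < c ∧ p + q - k < c ∧ c ≤ p ∧ c ≤ q := by
  rw [← coord_mem_Q]
  rcases (mem_ideals.1 hI).1 _ h with h | h
  · exact h
  · have := mem_Q_parity h
    simp only [coord] at this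
    omega

/-- Descending from `Q_k` through `Q_{k+1}` to `Q_k`. -/
lemma mem_of_two_steps (hI : I ∈ ideals k) {p q c p₁ q₁ c₁ p₂ q₂ c₂ : ℤ}
    (h : coord k p q c ∈ I) (h₁ : coord (k + 1) p₁ q₁ c₁ ∈ pentagramQ (k + 1))
    (h₂ : coord k p₂ q₂ c₂ ∈ pentagramQ k)
    (hu : (p = p₁ ∧ q = q₁ ∧ c = c₁) ∨ (p = p₁ - 1 ∧ q = q₁ - 1 ∧ c = c₁ - 1))
    (hd : (p₂ = p₁ - 1 ∧ q₂ = q₁ ∧ c₂ = c₁) ∨ (p₂ = p₁ ∧ q₂ = q₁ - 1 ∧ c₂ = c₁)) :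
    coord k p₂ q₂ c₂ ∈ I := by
  have hc := (mem_ideals.1 hI).2
  exact hc _ (Or.inl h₂) _ (hc _ (Or.inr h₁) _ h ((covers_up ..).2 hu)) ((covers_down ..).2 hd)

lemma Below.pred_left (hI : I ∈ ideals k) {p q c : ℤ} (h : Below k I p q c) :
    Below k I (p - 1) q c := by
  rcases h with h | h | h
  · left; omega
  · right; left; omega
  · have hb := bounds_of_mem hI h
    by_cases h' : p - 1 < c
    · exact Or.inl h'
    · right; right
      refine mem_of_two_steps hI h (p₁ := p) (q₁ := q) (c₁ := c) ?_ ?_ (by simp) (by simp) <;>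
        rw [coord_mem_Q] <;> omega

lemma Below.pred_right (hI : I ∈ ideals k) {p q c : ℤ} (h : Below k I p q c) :
    Below k I p (q - 1) c := by
  rcases h with h | h | h
  · left; omega
  · right; left; omega
  · have hb := bounds_of_mem hI h
    by_cases h' : q - 1 < c
    · exact Or.inr (Or.inl h')
    · right; right
      refine mem_of_two_steps hI h (p₁ := p) (q₁ := q) (c₁ := c) ?_ ?_ (by simp) (by simp) <;>
        rw [coord_mem_Q] <;> omega

lemma Below.succ_right (hI : I ∈ ideals k) {p q c : ℤ} (h : Below k I p q c) :
    Below k I p (q + 1) (c + 1) := by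
  rcases h with h | h | h
  · left; omega
  · right; left; omega
  · have hb := bounds_of_mem hI h
    by_cases h' : p < c + 1
    · exact Or.inl h'
    · right; right
      refine mem_of_two_steps hI h (p₁ := p + 1) (q₁ := q + 1) (c₁ := c + 1) ?_ ?_
        (by simp) (by simp) <;>
        rw [coord_mem_Q] <;> omega

lemma Below.succ_left (hI : I ∈ ideals k) {p q c : ℤ} (h : Below k I p q c) :
    Below k I (p + 1) q (c + 1) := by
  rcases h with h | h | h
  · left; omega
  · right; left; omega
  · have hb := bounds_of_mem hI h
    by_cases h' : q < c + 1
    · exact Or.inr (Or.inl h')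
    · right; right
      refine mem_of_two_steps hI h (p₁ := p + 1) (q₁ := q + 1) (c₁ := c + 1) ?_ ?_
        (by simp) (by simp) <;>
        rw [coord_mem_Q] <;> omega

lemma Below.mono (hI : I ∈ ideals k) {p q c c' : ℤ} (h : Below k I p q c) (hc : c ≤ c') :
    Below k I p q c' := by
  induction c', hc using Int.leInduction with
  | base => exact h
  | succ n _ ih =>
    have := (ih.succ_right hI).pred_right hI
    rwa [add_sub_cancel_right] at this

lemma Below.bounds (hI : I ∈ ideals k) {p q c : ℤ} (hp : 0 ≤ p) (hp' : p ≤ k) (hq : 0 ≤ q)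
    (hq' : q ≤ k) (h : Below k I p q c) : 0 < c ∧ p + q - k < c := by
  rcases h with h | h | h
  · omega
  · omega
  · have := bounds_of_mem hI h
    omega

/-- The threshold function of an ideal: above `(p, q)` the ideal contains exactly the levels
`c > C p q`. It is the corner-sum matrix of an alternating sign matrix. -/
lemma exists_corner (hI : I ∈ ideals k) : ∃ C : ℤ → ℤ → ℤ, ∀ p q, 0 ≤ p → p ≤ k → 0 ≤ q → q ≤ k →
    ∀ c, Below k I p q c ↔ C p q < c := by
  have key : ∀ p q, ∃ C : ℤ, 0 ≤ p → p ≤ k → 0 ≤ q → q ≤ k → ∀ c, Below k I p q c ↔ C < c := by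
    intro p q
    by_cases hb : 0 ≤ p ∧ p ≤ k ∧ 0 ≤ q ∧ q ≤ k
    · obtain ⟨h1, h2, h3, h4⟩ := hb
      obtain ⟨m, hm, hm'⟩ := Int.exists_least_of_bdd (P := fun c => Below k I p q c)
        ⟨0, fun c hc => (hc.bounds hI h1 h2 h3 h4).1.le⟩ ⟨p + 1, Or.inl (by omega)⟩
      refine ⟨m - 1, fun _ _ _ _ c => ⟨fun hc => ?_, fun hc => hm.mono hI (by omega)⟩⟩
      have := hm' c hc
      omega
    · exact ⟨0, fun h1 h2 h3 h4 => absurd ⟨h1, h2, h3, h4⟩ hb⟩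
  choose C hC using key
  exact ⟨C, hC⟩

end ideal

/-! ### The corner-sum matrix of a permutation -/

/-- `corner σ p q` is the number of `i ∈ [1, p]` with `σ i ≤ q`. -/
def corner (σ : ℤ → ℤ) (p q : ℤ) : ℤ := (((Finset.Icc 1 p).filter (fun i => σ i ≤ q)).card : ℤ)

section corner

variable {k : ℤ} {σ : ℤ → ℤ}

lemma corner_zero (σ : ℤ → ℤ) (q : ℤ) : corner σ 0 q = 0 := by
  simp [corner]

lemma corner_step (σ : ℤ → ℤ) {p : ℤ} (q : ℤ) (hp : 1 ≤ p) :
    corner σ p q = corner σ (p - 1) q + if σ p ≤ q then 1 else 0 := by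
  have h : Finset.Icc 1 p = insert p (Finset.Icc 1 (p - 1)) := by
    ext x
    simp only [Finset.mem_Icc, Finset.mem_insert]
    omega
  unfold corner
  rw [h, Finset.filter_insert]
  split_ifs with hσ
  · rw [Finset.card_insert_of_notMem (by simp)]
    push_cast
    rfl
  · simp

/-- The one column step that is not a telescoping sum: injectivity of `σ` on `[1, k]` makes column
increments at most `1`. -/
lemma corner_col (hσi : ∀ p p', 1 ≤ p → p ≤ k → 1 ≤ p' → p' ≤ k → σ p = σ p' → p = p')
    {p : ℤ} (q : ℤ) (hp : p ≤ k) :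
    corner σ p (q - 1) ≤ corner σ p q ∧ corner σ p q ≤ corner σ p (q - 1) + 1 := by
  unfold corner
  constructor
  · norm_cast
    apply Finset.card_le_card
    intro x
    simp only [Finset.mem_filter]
    rintro ⟨h1, h2⟩
    exact ⟨h1, by omega⟩
  · norm_cast
    have hsub : (Finset.Icc 1 p).filter (fun i => σ i ≤ q) ⊆
        (Finset.Icc 1 p).filter (fun i => σ i ≤ q - 1) ∪
          (Finset.Icc 1 p).filter (fun i => σ i = q) := by
      intro x
      simp only [Finset.mem_filter, Finset.mem_union]
      rintro ⟨h1, h2⟩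
      by_cases h : σ x = q
      · exact Or.inr ⟨h1, h⟩
      · exact Or.inl ⟨h1, by omega⟩
    have hone : ((Finset.Icc 1 p).filter (fun i => σ i = q)).card ≤ 1 := by
      rw [Finset.card_le_one]
      intro a ha b hb
      simp only [Finset.mem_filter, Finset.mem_Icc] at ha hb
      exact hσi a b ha.1.1 (by omega) hb.1.1 (by omega) (by omega)
    calc _ ≤ _ := Finset.card_le_card hsub
      _ ≤ _ := Finset.card_union_le _ _
      _ ≤ _ := by omega

lemma corner_le_left (σ : ℤ → ℤ) {p : ℤ} (q : ℤ) (hp : 0 ≤ p) : corner σ p q ≤ p := by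
  induction p, hp using Int.leInduction with
  | base => rw [corner_zero]
  | succ n hn ih =>
    rw [corner_step σ q (by omega), add_sub_cancel_right]
    split_ifs <;> omega

lemma corner_full (hσ : ∀ p, 1 ≤ p → p ≤ k → 1 ≤ σ p ∧ σ p ≤ k) {p : ℤ} (hp : 0 ≤ p)
    (hpk : p ≤ k) : corner σ p k = p := by
  induction p, hp using Int.leInduction with
  | base => rw [corner_zero]
  | succ n hn ih =>
    rw [corner_step σ k (by omega), add_sub_cancel_right, ih (by omega),
      if_pos (hσ (n + 1) (by omega) hpk).2]

lemma corner_col_zero (hσ : ∀ p, 1 ≤ p → p ≤ k → 1 ≤ σ p ∧ σ p ≤ k) {p : ℤ} (hp : 0 ≤ p)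
    (hpk : p ≤ k) : corner σ p 0 = 0 := by
  induction p, hp using Int.leInduction with
  | base => rw [corner_zero]
  | succ n hn ih =>
    have := (hσ (n + 1) (by omega) hpk).1
    rw [corner_step σ 0 (by omega), add_sub_cancel_right, ih (by omega), if_neg (by omega)]
    rfl

lemma corner_le_right (hσ : ∀ p, 1 ≤ p → p ≤ k → 1 ≤ σ p ∧ σ p ≤ k)
    (hσi : ∀ p p', 1 ≤ p → p ≤ k → 1 ≤ p' → p' ≤ k → σ p = σ p' → p = p')
    {p q : ℤ} (hp : 0 ≤ p) (hpk : p ≤ k) (hq : 0 ≤ q) : corner σ p q ≤ q := by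
  induction q, hq using Int.leInduction with
  | base => rw [corner_col_zero hσ hp hpk]
  | succ n hn ih =>
    have := (corner_col hσi (n + 1) hpk).2
    rw [add_sub_cancel_right] at this
    omega

lemma le_corner (hσ : ∀ p, 1 ≤ p → p ≤ k → 1 ≤ σ p ∧ σ p ≤ k)
    (hσi : ∀ p p', 1 ≤ p → p ≤ k → 1 ≤ p' → p' ≤ k → σ p = σ p' → p = p')
    {p q : ℤ} (hp : 0 ≤ p) (hpk : p ≤ k) (hqk : q ≤ k) : p + q - k ≤ corner σ p q := by
  induction q, hqk using Int.leInductionDown with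
  | base => rw [corner_full hσ hp hpk]; omega
  | pred n hn ih =>
    have := (corner_col hσi n hpk).2
    omega

lemma corner_nonneg (σ : ℤ → ℤ) (p q : ℤ) : 0 ≤ corner σ p q := by
  unfold corner
  positivity

end corner

/-! ### The surviving ideal attached to a permutation -/

/-- The smallest order ideal of `P_k` whose trace on `Q_k` has threshold function `corner σ`. -/
def permIdeal (k : ℤ) (σ : ℤ → ℤ) : Finset (ℤ × ℤ × ℤ) :=
  (pentagramPFinset k).filter (fun x =>
    (∃ p q c, x = coord k p q c ∧ corner σ p q < c) ∨
    (∃ p q c, x = coord (k + 1) p q c ∧ (corner σ p q < c ∨ corner σ (p - 1) (q - 1) + 1 < c)))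

lemma coord_mem_permIdeal {k : ℤ} {σ : ℤ → ℤ} {p q c : ℤ} (h : coord k p q c ∈ pentagramQ k) :
    coord k p q c ∈ permIdeal k σ ↔ corner σ p q < c := by
  rw [permIdeal, Finset.mem_filter, mem_PFinset]
  constructor
  · rintro ⟨-, ⟨p', q', c', he, hc⟩ | ⟨p', q', c', he, -⟩⟩
    · obtain ⟨rfl, rfl, rfl⟩ := coord_injective he
      exact hc
    · exact (coord_ne _ _ _ _ _ _ _ he).elim
  · exact fun hc => ⟨Or.inl h, Or.inl ⟨p, q, c, rfl, hc⟩⟩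

lemma coord_succ_mem_permIdeal {k : ℤ} {σ : ℤ → ℤ} {p q c : ℤ}
    (h : coord (k + 1) p q c ∈ pentagramQ (k + 1)) :
    coord (k + 1) p q c ∈ permIdeal k σ ↔
      corner σ p q < c ∨ corner σ (p - 1) (q - 1) + 1 < c := by
  rw [permIdeal, Finset.mem_filter, mem_PFinset]
  constructor
  · rintro ⟨-, ⟨p', q', c', he, -⟩ | ⟨p', q', c', he, hc⟩⟩
    · exact (coord_ne _ _ _ _ _ _ _ he.symm).elim
    · obtain ⟨rfl, rfl, rfl⟩ := coord_injective he
      exact hc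
  · exact fun hc => ⟨Or.inr h, Or.inr ⟨p, q, c, rfl, hc⟩⟩

section perm

variable {k : ℤ} {σ : ℤ → ℤ}

lemma permIdeal_mem_ideals
    (hσi : ∀ p p', 1 ≤ p → p ≤ k → 1 ≤ p' → p' ≤ k → σ p = σ p' → p = p') :
    permIdeal k σ ∈ ideals k := by
  rw [mem_ideals]
  have hsub : ∀ x ∈ permIdeal k σ, x ∈ pentagramP k := by
    intro x hx
    rw [permIdeal, Finset.mem_filter, mem_PFinset] at hx
    exact hx.1
  refine ⟨hsub, fun x hx y hy hxy => ?_⟩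
  rcases hsub y hy with hyQ | hyQ
  · have hxQ : x ∈ pentagramQ (k + 1) := by
      rcases hx with hx | hx
      · have := covers_parity hxy
        have := mem_Q_parity hx
        have := mem_Q_parity hyQ
        omega
      · exact hx
    obtain ⟨p, q, c, rfl, hb⟩ := exists_coord hxQ
    obtain ⟨p', q', c', rfl, hb'⟩ := exists_coord hyQ
    rw [coord_mem_permIdeal hyQ] at hy
    rw [coord_succ_mem_permIdeal hxQ]
    rcases (covers_up ..).1 hxy with ⟨rfl, rfl, rfl⟩ | ⟨rfl, rfl, rfl⟩
    · exact Or.inl hy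
    · right; omega
  · have hxQ := mem_Q_of_covers_left hyQ hx hxy
    obtain ⟨p, q, c, rfl, hb⟩ := exists_coord hyQ
    obtain ⟨p', q', c', rfl, hb'⟩ := exists_coord hxQ
    rw [coord_succ_mem_permIdeal hyQ] at hy
    rw [coord_mem_permIdeal hxQ]
    have e1 := corner_step σ q (show 1 ≤ p by omega)
    have e2 := corner_step σ (q - 1) (show 1 ≤ p by omega)
    have e3 := corner_col hσi (p := p) q (by omega)
    have e4 := corner_col hσi (p := p - 1) q (by omega)
    rcases (covers_down ..).1 hxy with ⟨rfl, rfl, rfl⟩ | ⟨rfl, rfl, rfl⟩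
    · split_ifs at e1 e2 <;> omega
    · split_ifs at e1 e2 <;> omega

/-- The free elements of `permIdeal k σ` lie above the entries `1` of the permutation matrix. -/
lemma permIdeal_free (hσ : ∀ p, 1 ≤ p → p ≤ k → 1 ≤ σ p ∧ σ p ≤ k)
    (hσi : ∀ p p', 1 ≤ p → p ≤ k → 1 ≤ p' → p' ≤ k → σ p = σ p' → p = p')
    {p q c : ℤ} (h : coord (k + 1) p q c ∈ pentagramQ (k + 1))
    (hf : IsFree k (permIdeal k σ) (coord (k + 1) p q c)) : σ p = q := by
  obtain ⟨b1, b2, b3, b4⟩ := (coord_mem_Q ..).1 h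
  have up1 : c ≤ corner σ p q := by
    by_contra hc
    have := le_corner hσ hσi (p := p) (q := q) (by omega) (by omega) (by omega)
    have hm : coord k p q c ∈ pentagramQ k := by rw [coord_mem_Q]; omega
    exact hf.1 _ (Or.inl hm) ((covers_up ..).2 (by simp))
      ((coord_mem_permIdeal hm).2 (by omega))
  have up2 : c - 1 ≤ corner σ (p - 1) (q - 1) := by
    by_contra hc
    have := le_corner hσ hσi (p := p - 1) (q := q - 1) (by omega) (by omega) (by omega)
    have := corner_nonneg σ (p - 1) (q - 1)
    have hm : coord k (p - 1) (q - 1) (c - 1) ∈ pentagramQ k := by rw [coord_mem_Q]; omega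
    exact hf.1 _ (Or.inl hm) ((covers_up ..).2 (by simp))
      ((coord_mem_permIdeal hm).2 (by omega))
  have dn1 : corner σ (p - 1) q < c := by
    have := corner_le_left σ (p := p - 1) q (by omega)
    by_cases hc : p - 1 < c
    · omega
    · have hm : coord k (p - 1) q c ∈ pentagramQ k := by rw [coord_mem_Q]; omega
      exact (coord_mem_permIdeal hm).1 (hf.2 _ (Or.inl hm) ((covers_down ..).2 (by simp)))
  have dn2 : corner σ p (q - 1) < c := by
    have := corner_le_right hσ hσi (p := p) (q := q - 1) (by omega) (by omega) (by omega)
    by_cases hc : q - 1 < c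
    · omega
    · have hm : coord k p (q - 1) c ∈ pentagramQ k := by rw [coord_mem_Q]; omega
      exact (coord_mem_permIdeal hm).1 (hf.2 _ (Or.inl hm) ((covers_down ..).2 (by simp)))
  have e1 := corner_step σ q (show 1 ≤ p by omega)
  have e2 := corner_step σ (q - 1) (show 1 ≤ p by omega)
  split_ifs at e1 e2 <;> omega

/-- If all free elements of an ideal lie above entries of the permutation matrix of `σ`, then the
threshold function of the ideal is `corner σ`: each row of the alternating sign matrix sums to `1`
and has no positive entry outside the column `σ p`. -/
lemma eq_permIdeal (hσ : ∀ p, 1 ≤ p → p ≤ k → 1 ≤ σ p ∧ σ p ≤ k)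
    {I : Finset (ℤ × ℤ × ℤ)} (hI : I ∈ ideals k)
    (hfree : ∀ p q c, coord (k + 1) p q c ∈ pentagramQ (k + 1) →
      IsFree k I (coord (k + 1) p q c) → σ p = q) :
    ∀ x ∈ pentagramQ k, x ∈ I ↔ x ∈ permIdeal k σ := by
  obtain ⟨C, hC⟩ := exists_corner hI
  have left : ∀ p q, 1 ≤ p → p ≤ k → 0 ≤ q → q ≤ k →
      C (p - 1) q ≤ C p q ∧ C p q ≤ C (p - 1) q + 1 := by
    intro p q h1 h2 h3 h4
    have hp := hC p q (by omega) h2 h3 h4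
    have hp' := hC (p - 1) q (by omega) (by omega) h3 h4
    constructor
    · by_contra hlt
      have := (hp' _).1 (((hp (C p q + 1)).2 (by omega)).pred_left hI)
      omega
    · have := ((hp' (C (p - 1) q + 1)).2 (by omega)).succ_left hI
      rw [sub_add_cancel, hp] at this
      omega
  have right : ∀ p q, 0 ≤ p → p ≤ k → 1 ≤ q → q ≤ k →
      C p (q - 1) ≤ C p q ∧ C p q ≤ C p (q - 1) + 1 := by
    intro p q h1 h2 h3 h4
    have hq := hC p q h1 h2 (by omega) h4
    have hq' := hC p (q - 1) h1 h2 (by omega) (by omega)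
    constructor
    · by_contra hlt
      have := (hq' _).1 (((hq (C p q + 1)).2 (by omega)).pred_right hI)
      omega
    · have := ((hq' (C p (q - 1) + 1)).2 (by omega)).succ_right hI
      rw [sub_add_cancel, hq] at this
      omega
  have bound : ∀ p q, 0 ≤ p → p ≤ k → 0 ≤ q → q ≤ k →
      0 ≤ C p q ∧ p + q - k ≤ C p q ∧ C p q ≤ p ∧ C p q ≤ q := by
    intro p q h1 h2 h3 h4
    have h := hC p q h1 h2 h3 h4
    have hb := ((h (C p q + 1)).2 (by omega)).bounds hI h1 h2 h3 h4
    have hl := (h (p + 1)).1 (Or.inl (by omega))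
    have hr := (h (q + 1)).1 (Or.inr (Or.inl (by omega)))
    omega
  -- an entry `1` of the alternating sign matrix carries a free element
  have entry : ∀ p q, 1 ≤ p → p ≤ k → 1 ≤ q → q ≤ k → σ p ≠ q →
      C p q - C (p - 1) q ≤ C p (q - 1) - C (p - 1) (q - 1) := by
    intro p q h1 h2 h3 h4 hne
    by_contra hlt
    apply hne
    have l1 := left p q h1 h2 (by omega) h4
    have l2 := left p (q - 1) h1 h2 (by omega) (by omega)
    have r1 := right p q (by omega) h2 h3 h4
    have r2 := right (p - 1) q (by omega) (by omega) h3 h4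
    have b1 := bound p q (by omega) h2 (by omega) h4
    have b2 := bound (p - 1) (q - 1) (by omega) (by omega) (by omega) (by omega)
    have hm : coord (k + 1) p q (C p q) ∈ pentagramQ (k + 1) := by rw [coord_mem_Q]; omega
    refine hfree p q (C p q) hm ⟨fun y hy hxy hyI => ?_, fun y hy hyx => ?_⟩
    · obtain ⟨p', q', c', rfl, hb⟩ := exists_coord (mem_Q_of_covers_right hm hy hxy)
      rcases (covers_up ..).1 hxy with ⟨rfl, rfl, rfl⟩ | ⟨rfl, rfl, rfl⟩
      · have := (hC p' q' (by omega) h2 (by omega) h4 _).1 (Or.inr (Or.inr hyI))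
        omega
      · have := (hC (p - 1) (q - 1) (by omega) (by omega) (by omega) (by omega) _).1
          (Or.inr (Or.inr hyI))
        omega
    · obtain ⟨p', q', c', rfl, hb⟩ := exists_coord (mem_Q_of_covers_left hm hy hyx)
      rcases (covers_down ..).1 hyx with ⟨rfl, rfl, rfl⟩ | ⟨rfl, rfl, rfl⟩
      · rcases (hC (p - 1) q' (by omega) (by omega) (by omega) h4 (C p q')).2 (by omega)
          with h | h | h
        · omega
        · omega
        · exact h
      · rcases (hC p' (q - 1) (by omega) h2 (by omega) (by omega) (C p' q)).2 (by omega)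
          with h | h | h
        · omega
        · omega
        · exact h
  -- row increments vanish left of `σ p` ...
  have low : ∀ p q, 1 ≤ p → p ≤ k → 0 ≤ q → q < σ p → C p q ≤ C (p - 1) q := by
    intro p q h1 h2 h3 h4
    have hs := hσ p h1 h2
    induction q, h3 using Int.leInduction with
    | base =>
      have := bound p 0 (by omega) h2 (by omega) (by omega)
      have := bound (p - 1) 0 (by omega) (by omega) (by omega) (by omega)
      omega
    | succ n hn ih =>
      have := entry p (n + 1) h1 h2 (by omega) (by omega) (by omega)
      rw [add_sub_cancel_right] at this
      have := ih (by omega)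
      omega
  -- ... and equal `1` from `σ p` on
  have high : ∀ p q, 1 ≤ p → p ≤ k → q ≤ k → σ p ≤ q → C (p - 1) q + 1 ≤ C p q := by
    intro p q h1 h2 h3 h4
    have hs := hσ p h1 h2
    induction q, h3 using Int.leInductionDown with
    | base =>
      have := bound p k (by omega) h2 (by omega) (by omega)
      have := bound (p - 1) k (by omega) (by omega) (by omega) (by omega)
      omega
    | pred n hn ih =>
      have := entry p n h1 h2 (by omega) (by omega) (by omega)
      have := ih (by omega)
      omega
  have eqC : ∀ p q, 0 ≤ p → p ≤ k → 0 ≤ q → q ≤ k → C p q = corner σ p q := by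
    intro p q h1 h2 h3 h4
    induction p, h1 using Int.leInduction with
    | base =>
      have := bound 0 q (by omega) h2 h3 h4
      rw [corner_zero]
      omega
    | succ n hn ih =>
      have l := left (n + 1) q (by omega) h2 h3 h4
      rw [corner_step σ q (by omega)]
      rw [add_sub_cancel_right] at l ⊢
      rw [← ih (by omega)]
      split_ifs with hs
      · have := high (n + 1) q (by omega) h2 h4 hs
        rw [add_sub_cancel_right] at this
        omega
      · have := low (n + 1) q (by omega) h2 h3 (by omega)
        rw [add_sub_cancel_right] at this
        omega
  intro x hx
  obtain ⟨p, q, c, rfl, hb⟩ := exists_coord hx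
  rw [coord_mem_permIdeal hx, ← eqC p q (by omega) (by omega) (by omega) (by omega),
    ← hC p q (by omega) (by omega) (by omega) (by omega)]
  constructor
  · exact fun h => Or.inr (Or.inr h)
  · rintro (h | h | h)
    · omega
    · omega
    · exact h

end perm

/-! ### Permutation matrices avoiding an arithmetic progression of lines -/

lemma dvd_of_dvd_of_eq {N a b : ℤ} (h : N ∣ a) (e : b = a) : N ∣ b := e ▸ h

lemma eq_of_dvd_sub {N a b : ℤ} (h : N ∣ a - b) (h1 : a - b < N) (h2 : b - a < N) : a = b := by
  have := Int.eq_zero_of_abs_lt_dvd h (by rw [abs_lt]; omega)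
  omega

/-- A set `T` of lines `2 p + q = const` meeting every row and column of `[1, k]²` once gives a
permutation. -/
lemma perm_of_lines {k : ℤ} (T : ℤ → Prop)
    (hE : ∀ p, 1 ≤ p → p ≤ k → ∃ q, 1 ≤ q ∧ q ≤ k ∧ T (2 * p + q - 3))
    (hrow : ∀ p q q', 1 ≤ q → q ≤ k → 1 ≤ q' → q' ≤ k →
      T (2 * p + q - 3) → T (2 * p + q' - 3) → q = q')
    (hcol : ∀ p p' q, 1 ≤ p → p ≤ k → 1 ≤ p' → p' ≤ k →
      T (2 * p + q - 3) → T (2 * p' + q - 3) → p = p') :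
    ∃ σ : ℤ → ℤ, (∀ p, 1 ≤ p → p ≤ k → 1 ≤ σ p ∧ σ p ≤ k) ∧
      (∀ p p', 1 ≤ p → p ≤ k → 1 ≤ p' → p' ≤ k → σ p = σ p' → p = p') ∧
      (∀ p q, 1 ≤ p → p ≤ k → 1 ≤ q → q ≤ k → (T (2 * p + q - 3) ↔ σ p = q)) := by
  choose! σ hσ using hE
  refine ⟨σ, fun p h1 h2 => ⟨(hσ p h1 h2).1, (hσ p h1 h2).2.1⟩, ?_, ?_⟩
  · intro p p' h1 h2 h3 h4 h
    refine hcol p p' (σ p) h1 h2 h3 h4 (hσ p h1 h2).2.2 ?_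
    rw [h]
    exact (hσ p' h3 h4).2.2
  · intro p q h1 h2 h3 h4
    obtain ⟨a1, a2, a3⟩ := hσ p h1 h2
    exact ⟨fun h => hrow p (σ p) q a1 a2 h3 h4 a3 h, fun h => h ▸ a3⟩

/-- For odd `k`, the lines in one residue class modulo `k` work. -/
lemma lines_odd (k x : ℤ) (hk : 1 ≤ k) (hodd : ¬ (2 : ℤ) ∣ k) :
    ∃ σ : ℤ → ℤ, (∀ p, 1 ≤ p → p ≤ k → 1 ≤ σ p ∧ σ p ≤ k) ∧
      (∀ p p', 1 ≤ p → p ≤ k → 1 ≤ p' → p' ≤ k → σ p = σ p' → p = p') ∧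
      (∀ p q, 1 ≤ p → p ≤ k → 1 ≤ q → q ≤ k → (k ∣ 2 * p + q - 3 - x ↔ σ p = q)) := by
  apply perm_of_lines (fun c => k ∣ c - x)
  · intro p _ _
    have h1 := Int.emod_nonneg (x - 2 * (p - 1)) (show k ≠ 0 by omega)
    have h2 := Int.emod_lt_of_pos (x - 2 * (p - 1)) (show 0 < k by omega)
    refine ⟨(x - 2 * (p - 1)) % k + 1, by omega, by omega, ?_⟩
    have h3 := Int.dvd_self_sub_emod (x := x - 2 * (p - 1)) (m := k)
    rw [← dvd_neg] at h3
    exact dvd_of_dvd_of_eq h3 (by ring)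
  · intro p q q' h1 h2 h3 h4 h5 h6
    refine eq_of_dvd_sub (N := k) ?_ (by omega) (by omega)
    exact dvd_of_dvd_of_eq (dvd_sub h5 h6) (by ring)
  · intro p p' q h1 h2 h3 h4 h5 h6
    refine eq_of_dvd_sub (N := k) ?_ (by omega) (by omega)
    have h7 : k ∣ 2 * (p - p') := by
      exact dvd_of_dvd_of_eq (dvd_sub h5 h6) (by ring)
    exact IsCoprime.dvd_of_dvd_mul_left (Int.isCoprime_iff_gcd_eq_one.2 (by
      rw [Int.gcd_comm, ← Int.isCoprime_iff_gcd_eq_one]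
      exact (Int.prime_two.coprime_iff_not_dvd).2 hodd)) h7

/-- For even `k = 2 h`, one residue class of even lines and one of odd lines modulo `2 k` work. -/
lemma lines_even (h x : ℤ) (hh : 1 ≤ h) (hx : (2 : ℤ) ∣ x) :
    ∃ σ : ℤ → ℤ, (∀ p, 1 ≤ p → p ≤ 2 * h → 1 ≤ σ p ∧ σ p ≤ 2 * h) ∧
      (∀ p p', 1 ≤ p → p ≤ 2 * h → 1 ≤ p' → p' ≤ 2 * h → σ p = σ p' → p = p') ∧
      (∀ p q, 1 ≤ p → p ≤ 2 * h → 1 ≤ q → q ≤ 2 * h →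
        ((4 * h ∣ 2 * p + q - 3 - x ∨ 4 * h ∣ 2 * p + q - 3 - x - (2 * h + 1)) ↔ σ p = q)) := by
  have two : ∀ z, 4 * h ∣ z → (2 : ℤ) ∣ z := fun z hz =>
    dvd_trans ⟨2 * h, by ring⟩ hz
  apply perm_of_lines (fun c => 4 * h ∣ c - x ∨ 4 * h ∣ c - x - (2 * h + 1))
  · intro p _ _
    have h1 := Int.emod_nonneg (x - 2 * (p - 1)) (show 4 * h ≠ 0 by omega)
    have h2 := Int.emod_lt_of_pos (x - 2 * (p - 1)) (show 0 < 4 * h by omega)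
    have h3 := Int.dvd_self_sub_emod (x := x - 2 * (p - 1)) (m := 4 * h)
    have h4 := two _ h3
    rw [← dvd_neg] at h3
    set ρ := (x - 2 * (p - 1)) % (4 * h)
    by_cases hρ : ρ < 2 * h
    · refine ⟨ρ + 1, by omega, by omega, Or.inl ?_⟩
      exact dvd_of_dvd_of_eq h3 (by ring)
    · refine ⟨ρ - 2 * h + 2, by omega, by omega, Or.inr ?_⟩
      exact dvd_of_dvd_of_eq (dvd_sub h3 (dvd_refl (4 * h))) (by ring)
  · have mixed : ∀ p q q', 1 ≤ q → q ≤ 2 * h → 1 ≤ q' → q' ≤ 2 * h →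
        4 * h ∣ 2 * p + q - 3 - x → 4 * h ∣ 2 * p + q' - 3 - x - (2 * h + 1) → False := by
      intro p q q' h1 h2 h3 h4 h5 h6
      have e1 := two _ h5
      have e2 := Int.le_of_dvd (by omega) (dvd_sub h5 h6)
      omega
    intro p q q' h1 h2 h3 h4 h5 h6
    rcases h5 with h5 | h5 <;> rcases h6 with h6 | h6
    · refine eq_of_dvd_sub (N := 4 * h) ?_ (by omega) (by omega)
      exact dvd_of_dvd_of_eq (dvd_sub h5 h6) (by ring)
    · exact (mixed p q q' h1 h2 h3 h4 h5 h6).elim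
    · exact (mixed p q' q h3 h4 h1 h2 h6 h5).elim
    · refine eq_of_dvd_sub (N := 4 * h) ?_ (by omega) (by omega)
      exact dvd_of_dvd_of_eq (dvd_sub h5 h6) (by ring)
  · intro p p' q h1 h2 h3 h4 h5 h6
    have key : 4 * h ∣ 2 * p - 2 * p' → p = p' := by
      intro hd
      have := eq_of_dvd_sub hd (by omega) (by omega)
      omega
    rcases h5 with h5 | h5 <;> rcases h6 with h6 | h6
    · apply key
      exact dvd_of_dvd_of_eq (dvd_sub h5 h6) (by ring)
    · have := two _ h5
      have := two _ h6
      omega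
    · have := two _ h5
      have := two _ h6
      omega
    · apply key
      exact dvd_of_dvd_of_eq (dvd_sub h5 h6) (by ring)

lemma not_dvd_of_lt {N z : ℤ} (h1 : -N < z) (h2 : z < N) (h3 : z ≠ 0) : ¬ N ∣ z := fun h =>
  h3 (Int.eq_zero_of_abs_lt_dvd h (abs_lt.2 ⟨h1, h2⟩))

/-- There is a set `T` of lines meeting `[1, k]²` in a permutation matrix and disjoint from a given
progression of fewer than `k` lines with difference `1` or `2`. -/
lemma exists_lines (k c₀ e : ℤ) (hk : 1 ≤ k) (he : e = 1 ∨ e = 2) (m : ℕ) (hm : (m : ℤ) < k) :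
    ∃ (T : ℤ → Prop) (σ : ℤ → ℤ), (∀ p, 1 ≤ p → p ≤ k → 1 ≤ σ p ∧ σ p ≤ k) ∧
      (∀ p p', 1 ≤ p → p ≤ k → 1 ≤ p' → p' ≤ k → σ p = σ p' → p = p') ∧
      (∀ p q, 1 ≤ p → p ≤ k → 1 ≤ q → q ≤ k → (T (2 * p + q - 3) ↔ σ p = q)) ∧
      ∀ i : ℕ, i < m → ¬ T (c₀ + e * i) := by
  by_cases hpar : (2 : ℤ) ∣ k
  · obtain ⟨h, rfl⟩ := hpar
    suffices main : ∃ x, (2 : ℤ) ∣ x ∧ ∀ i : ℕ, i < m → ¬ (4 * h ∣ c₀ + e * i - x ∨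
        4 * h ∣ c₀ + e * i - x - (2 * h + 1)) by
      obtain ⟨x, hx, hT⟩ := main
      obtain ⟨σ, h1, h2, h3⟩ := lines_even h x (by omega) hx
      exact ⟨fun c => 4 * h ∣ c - x ∨ 4 * h ∣ c - x - (2 * h + 1), σ, h1, h2, h3, hT⟩
    have two : ∀ z, 4 * h ∣ z → (2 : ℤ) ∣ z := fun z hz =>
      dvd_trans ⟨2 * h, by ring⟩ hz
    rcases he with rfl | rfl
    · -- the gap between the lines `x` and `x + k + 1` has room for `k` consecutive lines
      by_cases hc : (2 : ℤ) ∣ c₀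
      · refine ⟨c₀ - 2, by omega, fun i hi => ?_⟩
        rintro (hd | hd) <;> refine not_dvd_of_lt ?_ ?_ ?_ hd <;> omega
      · refine ⟨c₀ - 1, by omega, fun i hi => ?_⟩
        rintro (hd | hd) <;> refine not_dvd_of_lt ?_ ?_ ?_ hd <;> omega
    · -- only the lines of `T` of the parity of `c₀` matter; they are `c₀ - 2` modulo `2 k`
      by_cases hc : (2 : ℤ) ∣ c₀
      · refine ⟨c₀ - 2, by omega, fun i hi => ?_⟩
        rintro (hd | hd)
        · refine not_dvd_of_lt ?_ ?_ ?_ hd <;> omega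
        · have := two _ hd
          omega
      · refine ⟨c₀ - 3 - 2 * h, by omega, fun i hi => ?_⟩
        rintro (hd | hd)
        · have := two _ hd
          omega
        · refine not_dvd_of_lt ?_ ?_ ?_ hd <;> omega
  · obtain ⟨σ, h1, h2, h3⟩ := lines_odd k (c₀ - e) hk hpar
    refine ⟨fun c => k ∣ c - (c₀ - e), σ, h1, h2, h3, fun i hi hd => ?_⟩
    have hd' : k ∣ e * (i + 1) := by
      exact dvd_of_dvd_of_eq hd (by ring)
    have hdvd : k ∣ (i : ℤ) + 1 := by
      rcases he with rfl | rfl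
      · simpa using hd'
      · exact IsCoprime.dvd_of_dvd_mul_left
          ((Int.prime_two.coprime_iff_not_dvd).2 hpar).symm hd'
    exact not_dvd_of_lt (by omega) (by omega) (by omega) hdvd

/-! ### Nonvanishing -/

/-- Evaluation at a point with coordinates `-1` on `S` factors through `substNeg S`. -/
lemma eval_substNeg {S : Set ℤ} {g : ℤ → ℤ} (hgS : ∀ x ∈ S, g x = -1) (F : MvPolynomial ℤ ℤ) :
    MvPolynomial.eval g (substNeg S F) = MvPolynomial.eval g F := by
  have hhom : (MvPolynomial.eval g).comp (substNeg S) = MvPolynomial.eval g := by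
    apply MvPolynomial.ringHom_ext
    · intro r
      simp [substNeg]
    · intro i
      simp only [substNeg, RingHom.comp_apply, AlgHom.toRingHom_eq_coe, RingHom.coe_coe,
        MvPolynomial.aeval_X, MvPolynomial.eval_X]
      split_ifs with h
      · rw [map_neg, map_one, hgS i h]
      · rw [MvPolynomial.eval_X]
  exact RingHom.congr_fun hhom F

lemma eval_pentagramF (j k : ℤ) (g : ℤ → ℤ) :
    MvPolynomial.eval g (pentagramF j k) =
      ∑ I ∈ ideals k, ∏ p ∈ I, g (3 * p.1 + p.2.1 + j) := by
  rw [pentagramF, map_sum, ideals]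
  refine Finset.sum_congr rfl (fun I _ => ?_)
  rw [map_prod]
  exact Finset.prod_congr rfl (fun p _ => MvPolynomial.eval_X _)

theorem stmt2 (j k : ℤ) (hk : 1 ≤ k) (a d : ℤ) (hd : d = 2 ∨ d = 4) (m : ℕ)
    (hcard : (m : ℤ) < k) (S : Set ℤ)
    (hS : S = (fun i : ℕ => a + d * i) '' {i : ℕ | i < m})
    (hpar : ∀ x ∈ S, (2 : ℤ) ∣ (x - (j + k + 1))) :
    substNeg S (pentagramF j k) ≠ 0 := by
  -- in the coordinates of `Q_{k+1}`, the label `i` is the line `2 p + q - 3 = c`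
  -- with `i = 2 c - 3 k + 3 + j`
  obtain ⟨T, σ, hσ, hσi, hT, hTS⟩ := exists_lines k ((a + 3 * k - 3 - j) / 2) (d / 2) hk
    (by omega) m hcard
  let g : ℤ → ℤ := fun i => if ∃ c, i = 2 * c - 3 * k + 3 + j ∧ ¬ T c then -1 else 1
  have hgS : ∀ x ∈ S, g x = -1 := by
    intro x hx
    have hx2 := hpar x hx
    rw [hS] at hx
    obtain ⟨i, hi, rfl⟩ := hx
    have ha : (2 : ℤ) ∣ a - (j + k + 1) := by
      apply hpar
      rw [hS]
      exact ⟨0, lt_of_le_of_lt (Nat.zero_le i) hi, by simp⟩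
    refine if_pos ⟨_, ?_, hTS i hi⟩
    rcases hd with rfl | rfl <;> norm_num <;> omega
  have hg1 : ∀ i, g i = 1 ∨ g i = -1 := by
    intro i
    by_cases h : ∃ c, i = 2 * c - 3 * k + 3 + j ∧ ¬ T c
    · exact Or.inr (if_pos h)
    · exact Or.inl (if_neg h)
  have hgneg : ∀ i, g i = -1 ↔ ∃ c, i = 2 * c - 3 * k + 3 + j ∧ ¬ T c := by
    intro i
    by_cases h : ∃ c, i = 2 * c - 3 * k + 3 + j ∧ ¬ T c
    · exact ⟨fun _ => h, fun _ => if_pos h⟩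
    · have h1 : g i = 1 := if_neg h
      exact ⟨fun h2 => by omega, fun h2 => absurd h2 h⟩
  let wt : ℤ × ℤ × ℤ → ℤ := fun x => g (3 * x.1 + x.2.1 + j)
  have hwt : ∀ p q c, coord (k + 1) p q c ∈ pentagramQ (k + 1) →
      (wt (coord (k + 1) p q c) = -1 ↔ σ p ≠ q) := by
    intro p q c hc
    obtain ⟨b1, b2, b3, b4⟩ := (coord_mem_Q ..).1 hc
    have hT' := hT p q (by omega) (by omega) (by omega) (by omega)
    have hiff : (∃ c', 3 * (p + q - (k + 1)) + (p - q) + j = 2 * c' - 3 * k + 3 + j ∧ ¬ T c') ↔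
        σ p ≠ q := by
      rw [Ne, ← hT']
      constructor
      · rintro ⟨c', h1, h2⟩
        rwa [show 2 * p + q - 3 = c' by omega]
      · exact fun h => ⟨_, by ring, h⟩
    exact (hgneg _).trans hiff
  have hne : ∑ I ∈ ideals k, ∏ p ∈ I, wt p ≠ 0 := by
    refine sum_ne_zero k wt (fun x => hg1 _) (permIdeal k σ) (permIdeal_mem_ideals hσi) ?_ ?_
    · rw [Finset.eq_empty_iff_forall_notMem]
      intro x hx
      obtain ⟨h1, h2, h3⟩ := mem_freeBad.1 hx
      obtain ⟨p, q, c, rfl, -⟩ := exists_coord h1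
      exact (hwt p q c h1).1 h2 (permIdeal_free hσ hσi h1 h3)
    · intro I hI hgood
      refine eq_permIdeal hσ hI (fun p q c h1 h2 => ?_)
      by_contra hpq
      have : coord (k + 1) p q c ∈ freeBad k wt I :=
        mem_freeBad.2 ⟨h1, (hwt p q c h1).2 hpq, h2⟩
      rw [hgood] at this
      simp at this
  intro hzero
  apply hne
  have h := eval_pentagramF j k g
  rw [← eval_substNeg hgS, hzero, map_zero] at h
  exact h.symm

end
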